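/- arXiv:2404.18482 — 2 statements merged into one kernel-verified Lean document; each statement's English description precedes it below -/
import Mathlib

section
/- There is a constant C = C(n) > 0 such that for all κ ≥ 1, 0 ≤ r ≤ 1, θ ∈ S^{n−1}, and every integer m ≥ 0, the m-th power of the spherical Laplacian applied to the plane wave ω ↦ e^{iκ r θ·ω} satisfies ‖(−Δ_{S^{n−1}})^m e^{iκ r θ·(·)}‖_{L²(S^{n−1})} ≤ C (C m κ)^{2m}. -/
open scoped RealInnerProductSpace
open MeasureTheory

/-- The Euclidean Laplacian `Δf(x) = Σᵢ ∂²f/∂xᵢ²` of `f : ℝ^n → ℂ`. -/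
noncomputable def euclideanLaplacian {n : ℕ} (f : EuclideanSpace ℝ (Fin n) → ℂ)
    (x : EuclideanSpace ℝ (Fin n)) : ℂ :=
  ∑ i : Fin n, fderiv ℝ (fun y => fderiv ℝ f y (EuclideanSpace.single i 1)) x
    (EuclideanSpace.single i 1)

/-- `−Δ_{S^{n−1}}`, acting on functions on `ℝ^n` via the degree-0 homogeneous
extension: `(negSphereLaplacian g)(ω) = −Δ(y ↦ g(y/|y|))(ω)`. -/
noncomputable def negSphereLaplacian {n : ℕ}
    (g : EuclideanSpace ℝ (Fin n) → ℂ) : EuclideanSpace ℝ (Fin n) → ℂ :=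
  fun ω => -euclideanLaplacian (fun y => g (‖y‖⁻¹ • y)) ω

/-! Helper material. -/

open Polynomial

noncomputable def pN (P : ℂ[X]) : ℝ := P.sum fun _ a => ‖a‖

theorem pN_eq (P : ℂ[X]) (k : ℕ) (h : P.natDegree < k) :
    pN P = ∑ i ∈ Finset.range k, ‖P.coeff i‖ :=
  P.sum_over_range' (fun _ => norm_zero) k h

theorem pN_nonneg (P : ℂ[X]) : 0 ≤ pN P := by
  rw [pN_eq P _ (Nat.lt_succ_self _)]; positivity

theorem pN_add (P Q : ℂ[X]) : pN (P + Q) ≤ pN P + pN Q := by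
  have h := natDegree_add_le P Q
  rw [pN_eq (P+Q) (max P.natDegree Q.natDegree + 1) (by omega),
    pN_eq P (max P.natDegree Q.natDegree + 1) (by omega),
    pN_eq Q (max P.natDegree Q.natDegree + 1) (by omega), ← Finset.sum_add_distrib]
  exact Finset.sum_le_sum fun i _ => by rw [coeff_add]; exact norm_add_le _ _

theorem pN_C_mul (a : ℂ) (P : ℂ[X]) : pN (C a * P) = ‖a‖ * pN P := by
  have h := natDegree_C_mul_le a P
  rw [pN_eq (C a * P) (P.natDegree + 1) (by omega), pN_eq P (P.natDegree + 1) (by omega),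
    Finset.mul_sum]
  simp

theorem pN_X_mul (P : ℂ[X]) : pN (X * P) = pN P := by
  have h : (X * P).natDegree ≤ P.natDegree + 1 := by
    refine natDegree_mul_le.trans ?_
    rw [natDegree_X]; omega
  rw [pN_eq (X * P) (P.natDegree + 1 + 1) (by omega), pN_eq P (P.natDegree + 1) (by omega),
    Finset.sum_range_succ']
  simp

theorem pN_derivative (P : ℂ[X]) (d : ℕ) (hd : P.natDegree ≤ d) :
    pN (derivative P) ≤ d * pN P := by
  have h := natDegree_derivative_le P
  rw [pN_eq (derivative P) (d + 1) (by omega), pN_eq P (d + 1 + 1) (by omega),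
    Finset.sum_range_succ' _ (d + 1), mul_add, Finset.mul_sum]
  refine le_add_of_le_of_nonneg (Finset.sum_le_sum fun i hi => ?_) (by positivity)
  rw [coeff_derivative, norm_mul, mul_comm]
  rcases Nat.lt_or_ge i d with h1 | h1
  · gcongr
    rw [show (i : ℂ) + 1 = ((i + 1 : ℕ) : ℂ) by push_cast; rfl, Complex.norm_natCast]
    exact_mod_cast h1
  · rw [coeff_eq_zero_of_natDegree_lt (by omega)]; simp

theorem pN_eval (P : ℂ[X]) (z : ℂ) (hz : ‖z‖ ≤ 1) : ‖P.eval z‖ ≤ pN P := by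
  rw [eval_eq_sum, pN, Polynomial.sum, Polynomial.sum]
  refine (norm_sum_le _ _).trans (Finset.sum_le_sum fun i _ => ?_)
  rw [norm_mul, norm_pow]
  exact mul_le_of_le_one_right (norm_nonneg _) (pow_le_one₀ (norm_nonneg _) hz)

noncomputable def pD (c : ℂ) (P : ℂ[X]) : ℂ[X] := derivative P + C c * P

noncomputable def pStep (n : ℕ) (c : ℂ) (P : ℂ[X]) : ℂ[X] :=
  X * (X * pD c (pD c P)) + C (-1) * pD c (pD c P) + C ((n : ℂ) - 1) * (X * pD c P)

theorem pD_deg (c : ℂ) (P : ℂ[X]) (d : ℕ) (hd : P.natDegree ≤ d) : (pD c P).natDegree ≤ d := by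
  have h1 := natDegree_derivative_le P
  have h2 := natDegree_C_mul_le c P
  exact natDegree_add_le_of_degree_le (by omega) (by omega)

theorem pX_deg (P : ℂ[X]) (d : ℕ) (hd : P.natDegree ≤ d) : (X * P).natDegree ≤ d + 1 := by
  refine natDegree_mul_le.trans ?_
  rw [natDegree_X]; omega

theorem pStep_deg (n : ℕ) (c : ℂ) (P : ℂ[X]) (d : ℕ) (hd : P.natDegree ≤ d) :
    (pStep n c P).natDegree ≤ d + 2 := by
  have h1 := pD_deg c P d hd
  have h2 := pD_deg c _ d h1
  have h3 := pX_deg _ _ (pX_deg _ _ h2)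
  have h4 := natDegree_C_mul_le (-1) (pD c (pD c P))
  have h5 := natDegree_C_mul_le ((n : ℂ) - 1) (X * pD c P)
  have h6 := pX_deg _ _ h1
  exact natDegree_add_le_of_degree_le (natDegree_add_le_of_degree_le (by omega) (by omega)) (by omega)

theorem pD_N (c : ℂ) (P : ℂ[X]) (d : ℕ) (hd : P.natDegree ≤ d) :
    pN (pD c P) ≤ (d + ‖c‖) * pN P := by
  have h1 := pN_add (derivative P) (C c * P)
  have h2 := pN_derivative P d hd
  rw [pN_C_mul] at h1
  unfold pD
  linarith

theorem pStep_N (n : ℕ) (hn : 2 ≤ n) (c : ℂ) (P : ℂ[X]) (d : ℕ) (hd : P.natDegree ≤ d) :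
    pN (pStep n c P) ≤ (2 * (d + ‖c‖) ^ 2 + (n - 1) * (d + ‖c‖)) * pN P := by
  have h1 := pD_N c P d hd
  have h2 := pD_N c (pD c P) d (pD_deg c P d hd)
  have h3 := pN_add (X * (X * pD c (pD c P)) + C (-1) * pD c (pD c P)) (C ((n : ℂ) - 1) * (X * pD c P))
  have h4 := pN_add (X * (X * pD c (pD c P))) (C (-1) * pD c (pD c P))
  simp only [pN_C_mul, pN_X_mul, norm_neg, norm_one, one_mul] at h3 h4
  have h5 : ‖(n : ℂ) - 1‖ = n - 1 := by
    rw [show (n : ℂ) - 1 = ((n - 1 : ℕ) : ℂ) by push_cast [show 1 ≤ n by omega]; rfl,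
      Complex.norm_natCast]
    push_cast [show 1 ≤ n by omega]; rfl
  rw [h5] at h3
  have hn' : (0 : ℝ) ≤ n - 1 := by
    have : (2 : ℝ) ≤ n := by exact_mod_cast hn
    linarith
  have h6 := mul_le_mul_of_nonneg_left h1 hn'
  have h7 := mul_le_mul_of_nonneg_left h1 (show (0:ℝ) ≤ d + ‖c‖ by positivity)
  unfold pStep
  nlinarith

theorem iter_bound (n : ℕ) (hn : 2 ≤ n) (c : ℂ) (κ : ℝ) (hκ : 1 ≤ κ) (hc : ‖c‖ ≤ κ) (m : ℕ) :
    ((pStep n c)^[m] 1).natDegree ≤ 2 * m ∧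
    pN ((pStep n c)^[m] 1) ≤ ((n + 1) * (2 * m * κ) ^ 2) ^ m := by
  induction m with
  | zero => 
    have := pN_eq (1 : ℂ[X]) 1 (by simp)
    simp [this]
  | succ m ih =>
    obtain ⟨h1, h2⟩ := ih
    rw [Function.iterate_succ_apply']
    refine ⟨pStep_deg n c _ _ h1, ?_⟩
    have h3 := pStep_N n hn c _ _ h1
    have hn' : (2 : ℝ) ≤ n := by exact_mod_cast hn
    refine h3.trans ?_
    rw [pow_succ' _ m]
    have h0 := pN_nonneg ((pStep n c)^[m] 1)
    have hm : (0:ℝ) ≤ m := Nat.cast_nonneg m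
    have hb : (((2 * m : ℕ) : ℝ) + ‖c‖) ≤ 2 * ((m + 1 : ℕ) : ℝ) * κ := by
      push_cast
      nlinarith
    have hb1 : 1 ≤ 2 * ((m + 1 : ℕ) : ℝ) * κ := by
      push_cast
      nlinarith
    have hb0 : 0 ≤ (((2 * m : ℕ) : ℝ) + ‖c‖) := by positivity
    have hm1 : (m : ℝ) ≤ ((m + 1 : ℕ) : ℝ) := by push_cast; linarith
    gcongr ?_ * ?_
    · generalize (((2 * m : ℕ) : ℝ) + ‖c‖) = a at *
      generalize 2 * ((m + 1 : ℕ) : ℝ) * κ = b at *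
      have e1 : a ^ 2 ≤ b ^ 2 := by gcongr
      have e2 : a ≤ b ^ 2 := by nlinarith
      nlinarith
    · refine h2.trans ?_
      gcongr

noncomputable def pF (c : ℂ) (P : ℂ[X]) (s : ℝ) : ℂ := P.eval (s : ℂ) * Complex.exp (c * s)

theorem pF_deriv (c : ℂ) (P : ℂ[X]) (s : ℝ) : HasDerivAt (pF c P) (pF c (pD c P) s) s := by
  have h1 := (P.hasDerivAt (s : ℂ)).mul (((hasDerivAt_id (s : ℂ)).const_mul c).cexp)
  have h2 := h1.comp_ofReal
  unfold pF pD
  refine h2.congr_deriv ?_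
  simp only [id, eval_add, eval_mul, eval_C]
  ring

theorem hasFDerivAt_inv_norm {n : ℕ} (y : EuclideanSpace ℝ (Fin n)) (hy : y ≠ 0) :
    HasFDerivAt (fun z : EuclideanSpace ℝ (Fin n) => ‖z‖⁻¹)
      (-(‖y‖⁻¹ ^ 3) • innerSL ℝ y) y := by
  have h0 : ‖y‖ ≠ 0 := norm_ne_zero_iff.2 hy
  have h1 := (hasStrictFDerivAt_norm_sq y).hasFDerivAt
  have h2 : HasDerivAt (fun q : ℝ => (Real.sqrt q)⁻¹) (-(1 / (2 * √(‖y‖ ^ 2))) / (√(‖y‖ ^ 2)) ^ 2) (‖y‖ ^ 2) :=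
    (Real.hasDerivAt_sqrt (by positivity)).inv (by simpa using hy)
  have h3 := h2.comp_hasFDerivAt y h1
  have e : ((fun q : ℝ => (Real.sqrt q)⁻¹) ∘ fun z : EuclideanSpace ℝ (Fin n) => ‖z‖ ^ 2) = fun z => ‖z‖⁻¹ := by
    funext z; simp
  rw [e] at h3
  refine h3.congr_fderiv ?_
  ext v
  simp
  field_simp

theorem hasFDerivAt_u {n : ℕ} (θ y : EuclideanSpace ℝ (Fin n)) (hy : y ≠ 0) :
    HasFDerivAt (fun z : EuclideanSpace ℝ (Fin n) => ⟪θ, z⟫ * ‖z‖⁻¹)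
      (⟪θ, y⟫ • (-(‖y‖⁻¹ ^ 3) • innerSL ℝ y) + ‖y‖⁻¹ • innerSL ℝ θ) y :=
  ((innerSL ℝ θ).hasFDerivAt (x := y)).mul (hasFDerivAt_inv_norm y hy)

theorem second_deriv {n : ℕ} (θ ω e : EuclideanSpace ℝ (Fin n)) (hω : ‖ω‖ = 1)
    (F F1 : ℝ → ℂ) (F2 : ℂ) (hF : ∀ s, HasDerivAt F (F1 s) s)
    (hF1 : HasDerivAt F1 F2 ⟪θ, ω⟫)
    (g : EuclideanSpace ℝ (Fin n) → ℂ) (hg : ∀ z, ‖z‖ = 1 → g z = F ⟪θ, z⟫) :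
    fderiv ℝ (fun y => fderiv ℝ (fun y => g (‖y‖⁻¹ • y)) y e) ω e =
      F2 * ((⟪θ, e⟫ - ⟪θ, ω⟫ * ⟪ω, e⟫) ^ 2 : ℝ) +
      F1 ⟪θ, ω⟫ * ((-2 * ⟪θ, e⟫ * ⟪ω, e⟫ - ⟪θ, ω⟫ * ⟪e, e⟫ + 3 * ⟪θ, ω⟫ * ⟪ω, e⟫ ^ 2 : ℝ) : ℂ) := by
  have hev : ∀ y : EuclideanSpace ℝ (Fin n), y ≠ 0 →
      (fun y => g (‖y‖⁻¹ • y)) =ᶠ[nhds y] (F ∘ fun z => ⟪θ, z⟫ * ‖z‖⁻¹) := by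
    intro y hy
    filter_upwards [isOpen_ne.mem_nhds hy] with z hz
    have h0 : ‖z‖ ≠ 0 := norm_ne_zero_iff.2 hz
    rw [hg _ (by rw [norm_smul, norm_inv, norm_norm, inv_mul_cancel₀ h0]), inner_smul_right, mul_comm]
    rfl
  have h1 : ∀ y : EuclideanSpace ℝ (Fin n), y ≠ 0 →
      fderiv ℝ (fun y => g (‖y‖⁻¹ • y)) y e =
        (⟪θ, y⟫ * (-(‖y‖⁻¹ ^ 3) * ⟪y, e⟫) + ‖y‖⁻¹ * ⟪θ, e⟫) • F1 (⟪θ, y⟫ * ‖y‖⁻¹) := by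
    intro y hy
    have h := (HasFDerivAt.congr_of_eventuallyEq
      ((hF _).hasFDerivAt.comp y (hasFDerivAt_u θ y hy)) (hev y hy)).fderiv
    rw [h]
    simp
    ring
  have hω0 : ω ≠ 0 := by rintro rfl; simp at hω
  have hev2 : (fun y => fderiv ℝ (fun y => g (‖y‖⁻¹ • y)) y e) =ᶠ[nhds ω]
      fun y => (⟪θ, y⟫ * (-(‖y‖⁻¹ ^ 3) * ⟪y, e⟫) + ‖y‖⁻¹ * ⟪θ, e⟫) • F1 (⟪θ, y⟫ * ‖y‖⁻¹) := by
    filter_upwards [isOpen_ne.mem_nhds hω0] with z hz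
    exact h1 z hz
  have hi := hasFDerivAt_inv_norm ω hω0
  have hie : HasFDerivAt (fun y : EuclideanSpace ℝ (Fin n) => ⟪y, e⟫) (innerSL ℝ e) ω := by
    have := (innerSL ℝ e).hasFDerivAt (x := ω)
    refine this.congr_of_eventuallyEq (Filter.Eventually.of_forall fun y => ?_)
    exact real_inner_comm _ _
  have hc := ((((innerSL ℝ θ).hasFDerivAt (x := ω)).mul (((hi.pow 3).neg).mul hie)).add
    (hi.mul_const ⟪θ, e⟫))
  have hF1' : HasDerivAt F1 F2 (⟪θ, ω⟫ * ‖ω‖⁻¹) := by simpa [hω] using hF1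
  have hs := hc.smul (hF1'.hasFDerivAt.comp ω (hasFDerivAt_u θ ω hω0))
  have h := (HasFDerivAt.congr_of_eventuallyEq hs hev2).fderiv
  rw [h]
  simp [hω, real_inner_comm]
  ring

theorem laplacian_zonal {n : ℕ} (θ ω : EuclideanSpace ℝ (Fin n)) (hθ : ‖θ‖ = 1) (hω : ‖ω‖ = 1)
    (F F1 : ℝ → ℂ) (F2 : ℂ) (hF : ∀ s, HasDerivAt F (F1 s) s)
    (hF1 : HasDerivAt F1 F2 ⟪θ, ω⟫)
    (g : EuclideanSpace ℝ (Fin n) → ℂ) (hg : ∀ z, ‖z‖ = 1 → g z = F ⟪θ, z⟫) :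
    negSphereLaplacian g ω = ((⟪θ, ω⟫ : ℝ) ^ 2 - 1 : ℂ) * F2
      + ((n : ℂ) - 1) * (⟪θ, ω⟫ : ℝ) * F1 ⟪θ, ω⟫ := by
  unfold negSphereLaplacian euclideanLaplacian
  rw [Finset.sum_congr rfl fun i _ => second_deriv θ ω (EuclideanSpace.single i 1) hω F F1 F2 hF hF1 g hg,
    Finset.sum_add_distrib, ← Finset.mul_sum, ← Finset.mul_sum, ← Complex.ofReal_sum,
    ← Complex.ofReal_sum]
  have e1 : ∑ i, θ i ^ 2 = 1 := by
    rw [← EuclideanSpace.real_norm_sq_eq, hθ]; norm_num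
  have e2 : ∑ i, ω i ^ 2 = 1 := by
    rw [← EuclideanSpace.real_norm_sq_eq, hω]; norm_num
  have e3 : ∑ i, θ i * ω i = ⟪θ, ω⟫ := by
    simp [PiLp.inner_apply, mul_comm]
  generalize (⟪θ, ω⟫ : ℝ) = s at *
  have k1 : ∑ i : Fin n, (⟪θ, EuclideanSpace.single i (1:ℝ)⟫ - s * ⟪ω, EuclideanSpace.single i (1:ℝ)⟫) ^ 2 = 1 - s ^ 2 := by
    have : ∀ i : Fin n, (⟪θ, EuclideanSpace.single i (1:ℝ)⟫ - s * ⟪ω, EuclideanSpace.single i (1:ℝ)⟫) ^ 2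
        = θ i ^ 2 - 2 * s * (θ i * ω i) + s ^ 2 * ω i ^ 2 := by
      intro i
      simp [EuclideanSpace.inner_single_right]
      ring
    simp only [this, Finset.sum_add_distrib, Finset.sum_sub_distrib, ← Finset.mul_sum, e1, e2, e3]
    ring
  have k2 : ∑ i : Fin n, (-2 * ⟪θ, EuclideanSpace.single i (1:ℝ)⟫ * ⟪ω, EuclideanSpace.single i (1:ℝ)⟫
      - s * ⟪EuclideanSpace.single i (1:ℝ), EuclideanSpace.single i (1:ℝ)⟫
      + 3 * s * ⟪ω, EuclideanSpace.single i (1:ℝ)⟫ ^ 2) = -((n : ℝ) - 1) * s := by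
    have : ∀ i : Fin n, (-2 * ⟪θ, EuclideanSpace.single i (1:ℝ)⟫ * ⟪ω, EuclideanSpace.single i (1:ℝ)⟫
      - s * ⟪EuclideanSpace.single i (1:ℝ), EuclideanSpace.single i (1:ℝ)⟫
      + 3 * s * ⟪ω, EuclideanSpace.single i (1:ℝ)⟫ ^ 2)
        = -2 * (θ i * ω i) - s + 3 * s * ω i ^ 2 := by
      intro i
      simp [EuclideanSpace.inner_single_right]
      ring
    simp only [this, Finset.sum_add_distrib, Finset.sum_sub_distrib, ← Finset.mul_sum, e2, e3]
    simp
    ring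
  rw [k1, k2]
  push_cast
  ring

theorem iter_eq {n : ℕ} (θ : EuclideanSpace ℝ (Fin n)) (hθ : ‖θ‖ = 1) (c : ℂ) (m : ℕ) :
    ∀ ω : EuclideanSpace ℝ (Fin n), ‖ω‖ = 1 →
      (negSphereLaplacian^[m] (fun ζ => Complex.exp (c * (⟪θ, ζ⟫ : ℝ)))) ω =
        pF c ((pStep n c)^[m] 1) ⟪θ, ω⟫ := by
  induction m with
  | zero => intro ω _; simp [pF]
  | succ m ih =>
    intro ω hω
    rw [Function.iterate_succ_apply', Function.iterate_succ_apply']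
    rw [laplacian_zonal θ ω hθ hω _ _ _ (pF_deriv c _) (pF_deriv c _ _) _ ih]
    simp only [pF, pStep, eval_add, eval_mul, eval_C, eval_X]
    ring

theorem normalize_lip {E : Type*} [NormedAddCommGroup E] [NormedSpace ℝ E] :
    LipschitzOnWith 2 (fun x : E => ‖x‖⁻¹ • x) {x | 1 ≤ ‖x‖} := by
  refine LipschitzOnWith.of_dist_le_mul fun x hx y hy => ?_
  simp only [Set.mem_ofPred_eq] at hx hy
  rw [dist_eq_norm, dist_eq_norm]
  have hx0 : ‖x‖ ≠ 0 := by linarith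
  have hy0 : ‖y‖ ≠ 0 := by linarith
  have e : ‖x‖⁻¹ • x - ‖y‖⁻¹ • y = ‖x‖⁻¹ • (x - y) + (‖x‖⁻¹ - ‖y‖⁻¹) • y := by
    module
  rw [e]
  refine (norm_add_le _ _).trans ?_
  rw [norm_smul, norm_smul, norm_inv, norm_norm, Real.norm_eq_abs]
  have h1 : |‖x‖⁻¹ - ‖y‖⁻¹| * ‖y‖ = ‖x‖⁻¹ * |‖y‖ - ‖x‖| := by
    rw [show ‖x‖⁻¹ - ‖y‖⁻¹ = ‖x‖⁻¹ * ‖y‖⁻¹ * (‖y‖ - ‖x‖) by field_simp, abs_mul,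
      abs_of_nonneg (by positivity)]
    field_simp
  have h2 : |‖y‖ - ‖x‖| ≤ ‖x - y‖ := by
    rw [norm_sub_rev]; exact abs_norm_sub_norm_le y x
  have h3 : ‖x‖⁻¹ ≤ 1 := inv_le_one_of_one_le₀ hx
  have h4 : 0 ≤ ‖x‖⁻¹ := by positivity
  rw [h1]
  have := norm_nonneg (x - y)
  have := abs_nonneg (‖y‖ - ‖x‖)
  push_cast
  nlinarith

noncomputable def chart {k : ℕ} (i : Fin (k + 1)) (σ : ℝ) (v : Fin k → ℝ) :
    EuclideanSpace ℝ (Fin (k + 1)) :=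
  WithLp.toLp 2 (i.insertNth (α := fun _ => ℝ) σ v)

theorem chart_lip {k : ℕ} (i : Fin (k + 1)) (σ : ℝ) : ∃ K, LipschitzWith K (chart i σ) := by
  refine ⟨_, (PiLp.lipschitzWith_toLp 2 _).comp (Kf := _) (Kg := 1) (LipschitzWith.of_dist_le_mul fun x y => ?_)⟩
  rw [NNReal.coe_one, one_mul, dist_pi_le_iff dist_nonneg]
  intro j
  refine Fin.succAboveCases i ?_ (fun j => ?_) j
  · simp
  · simpa using dist_le_pi_dist x y j

theorem chart_norm {k : ℕ} (i : Fin (k + 1)) (σ : ℝ) (hσ : |σ| = 1) (v : Fin k → ℝ) :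
    1 ≤ ‖chart i σ v‖ := by
  have := PiLp.norm_apply_le (chart i σ v) i
  simpa [chart, hσ] using this

theorem sphere_finite (k : ℕ) :
    μH[(k : ℝ)] (Metric.sphere (0 : EuclideanSpace ℝ (Fin (k + 1))) 1) < ⊤ := by
  let Q : Set (Fin k → ℝ) := Set.Icc (-1) 1
  have hQ : μH[(k : ℝ)] Q < ⊤ := by
    have := hausdorffMeasure_pi_real (ι := Fin k)
    rw [Fintype.card_fin] at this
    rw [this]
    exact isCompact_Icc.measure_lt_top
  have key : ∀ i : Fin (k + 1), ∀ σ : ℝ, |σ| = 1 →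
      μH[(k : ℝ)] ((fun v => ‖chart i σ v‖⁻¹ • chart i σ v) '' Q) < ⊤ := by
    intro i σ hσ
    obtain ⟨K, hK⟩ := chart_lip i σ
    have h := (normalize_lip.comp (hK.lipschitzOnWith (s := Q))
      (fun v _ => chart_norm i σ hσ v)).hausdorffMeasure_image_le (d := k) (by positivity)
    refine lt_of_le_of_lt h (ENNReal.mul_lt_top ?_ hQ)
    exact ENNReal.rpow_lt_top_of_nonneg (by positivity) ENNReal.coe_ne_top
  have hsub : Metric.sphere (0 : EuclideanSpace ℝ (Fin (k + 1))) 1 ⊆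
      ⋃ i : Fin (k + 1), ((fun v => ‖chart i 1 v‖⁻¹ • chart i 1 v) '' Q) ∪
        ((fun v => ‖chart i (-1) v‖⁻¹ • chart i (-1) v) '' Q) := by
    intro ω hω
    have hω1 : ‖ω‖ = 1 := by simpa using hω
    obtain ⟨i, -, hi⟩ := Finset.exists_max_image Finset.univ (fun j => |ω j|) Finset.univ_nonempty
    have hi0 : 0 < |ω i| := by
      by_contra hcon
      have : ω = 0 := by
        ext j
        have := hi j (Finset.mem_univ j)
        have h5 : |ω j| = 0 := le_antisymm (by linarith) (abs_nonneg _)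
        simpa using h5
      rw [this] at hω1
      simp at hω1
    have gen : ∀ σ : ℝ, |σ| = 1 → ω i = |ω i| * σ →
        ω ∈ (fun v => ‖chart i σ v‖⁻¹ • chart i σ v) '' Q := by
      intro σ hσ hs
      have hch : chart i σ (fun j => |ω i|⁻¹ * ω (i.succAbove j)) = |ω i|⁻¹ • ω := by
        ext j
        refine Fin.succAboveCases i ?_ (fun j => ?_) j
        · simp only [chart, Fin.insertNth_apply_same, PiLp.smul_apply, smul_eq_mul]
          rw [eq_comm, inv_mul_eq_iff_eq_mul₀ hi0.ne']
          exact hs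
        · simp [chart]
      refine ⟨fun j => |ω i|⁻¹ * ω (i.succAbove j), ?_, ?_⟩
      · have : ∀ j : Fin k, |(|ω i|⁻¹ * ω (i.succAbove j))| ≤ 1 := by
          intro j
          rw [abs_mul, abs_inv, abs_abs, inv_mul_le_iff₀ hi0, mul_one]
          exact hi _ (Finset.mem_univ _)
        exact ⟨fun j => (abs_le.1 (this j)).1, fun j => (abs_le.1 (this j)).2⟩
      · simp only [hch]
        rw [norm_smul, hω1, smul_smul]
        simp [hi0.ne']
    refine Set.mem_iUnion.2 ⟨i, ?_⟩
    rcases le_total 0 (ω i) with h | h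
    · exact Or.inl (gen 1 (by simp) (by rw [abs_of_nonneg h]; ring))
    · exact Or.inr (gen (-1) (by simp) (by rw [abs_of_nonpos h]; ring))
  refine lt_of_le_of_lt (measure_mono hsub) ?_
  refine lt_of_le_of_lt (measure_iUnion_fintype_le _ _) ?_
  refine ENNReal.sum_lt_top.2 fun i _ => ?_
  exact measure_union_lt_top (key i 1 (by simp)) (key i (-1) (by simp))

/-- There is `C = C(n) > 0` such that for all `κ ≥ 1`, `0 ≤ r ≤ 1`, unit `θ` and
integers `m ≥ 0`, `‖(−Δ_{S^{n−1}})^m e^{iκrθ·(·)}‖_{L²(S^{n−1})} ≤ C (Cmκ)^{2m}`,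
the `L²` norm being w.r.t. (n−1)-dimensional Hausdorff (surface) measure. -/
theorem stmt_7 (n : ℕ) (hn : 2 ≤ n) :
    ∃ C : ℝ, 0 < C ∧ ∀ (κ r : ℝ), 1 ≤ κ → 0 ≤ r → r ≤ 1 →
      ∀ θ : EuclideanSpace ℝ (Fin n), ‖θ‖ = 1 → ∀ m : ℕ,
        (∫ ω in Metric.sphere (0 : EuclideanSpace ℝ (Fin n)) 1,
            ‖(negSphereLaplacian^[m]
                (fun ζ => Complex.exp (Complex.I * (κ * r) * (⟪θ, ζ⟫ : ℝ)))) ω‖ ^ 2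
          ∂(μH[(n : ℝ) - 1])) ^ (1 / 2 : ℝ)
        ≤ C * (C * m * κ) ^ (2 * m) := by
  set V := (μH[(n : ℝ) - 1]).real (Metric.sphere (0 : EuclideanSpace ℝ (Fin n)) 1) with hV
  have hfin : μH[(n : ℝ) - 1] (Metric.sphere (0 : EuclideanSpace ℝ (Fin n)) 1) < ⊤ := by
    obtain ⟨k, rfl⟩ : ∃ k, n = k + 1 := ⟨n - 1, by omega⟩
    have := sphere_finite k
    simpa using this
  have hV0 : 0 ≤ V := measureReal_nonneg
  refine ⟨√V + 2 * (n + 1), by positivity, ?_⟩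
  intro κ r hκ hr0 hr1 θ hθ m
  set c : ℂ := Complex.I * (κ * r) with hcdef
  have hc : ‖c‖ ≤ κ := by
    rw [hcdef, norm_mul, Complex.norm_I, one_mul, ← Complex.ofReal_mul, Complex.norm_real,
      Real.norm_eq_abs, abs_of_nonneg (by positivity)]
    nlinarith
  have hre : ∀ s : ℝ, ‖Complex.exp (c * s)‖ = 1 := by
    intro s
    rw [Complex.norm_exp]
    simp [hcdef]
  obtain ⟨-, hN⟩ := iter_bound n hn c κ hκ hc m
  set M : ℝ := ((n + 1) * (2 * m * κ) ^ 2) ^ m with hM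
  have hM0 : 0 ≤ M := by positivity
  have hpt : ∀ ω ∈ Metric.sphere (0 : EuclideanSpace ℝ (Fin n)) 1,
      ‖‖(negSphereLaplacian^[m] (fun ζ => Complex.exp (c * (⟪θ, ζ⟫ : ℝ)))) ω‖ ^ 2‖ ≤ M ^ 2 := by
    intro ω hω
    have hω1 : ‖ω‖ = 1 := by simpa using hω
    rw [iter_eq θ hθ c m ω hω1, norm_pow, norm_norm]
    gcongr
    rw [pF, norm_mul, hre, mul_one]
    refine (pN_eval _ _ ?_).trans hN
    rw [Complex.norm_real]
    have := norm_inner_le_norm (𝕜 := ℝ) θ ω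
    rwa [hθ, hω1, one_mul] at this
  have hint := norm_setIntegral_le_of_norm_le_const hfin hpt
  rw [← hV] at hint
  have hint2 := (le_abs_self _).trans hint
  rw [← Real.sqrt_eq_rpow]
  refine (Real.sqrt_le_sqrt hint2).trans ?_
  rw [Real.sqrt_mul (by positivity), Real.sqrt_sq hM0, mul_comm]
  have hs := Real.sqrt_nonneg V
  have hn0 : (0 : ℝ) ≤ n := Nat.cast_nonneg n
  gcongr
  · linarith
  · rw [hM, pow_mul]
    gcongr
    calc ((n : ℝ) + 1) * (2 * m * κ) ^ 2 ≤ (n + 1) ^ 2 * (2 * m * κ) ^ 2 := by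
          gcongr
          nlinarith
      _ = (2 * (n + 1) * m * κ) ^ 2 := by ring
      _ ≤ ((√V + 2 * (n + 1)) * m * κ) ^ 2 := by
          gcongr
          linarith
end

section
/- There exists a constant C(n) such that for every κ > 0 and every f ∈ L²(S^{n−1}), the Herglotz wave function (P_κ f)(x) = ∫_{S^{n−1}} e^{iκ ω·x} f(ω) dS(ω) satisfies κ^{(n−1)/2} ‖P_κ f‖_{L²(B₁)} ≤ C(n) ‖f‖_{L²(S^{n−1})}, equivalently (1/κ) ∫_{B_κ} |(f dS)^∧(ξ)|² dξ ≤ C(n)² ‖f‖²_{L²(S^{n−1})}. -/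
open scoped RealInnerProductSpace
open MeasureTheory

lemma frost_piece (m : ℕ) (i : Fin (m+1)) (s : ℝ) (hs : s = 1 ∨ s = -1) :
    ∃ K : NNReal, ∀ P : Set (EuclideanSpace ℝ (Fin (m+1))),
      (∀ x ∈ P, ‖x‖ = 1 ∧ 1 / ((m:ℝ)+1) ≤ s * x i) → 
      ∀ x y, x ∈ P → y ∈ P → 
      dist x y ≤ K * dist (fun j => x (i.succAbove j) : Fin m → ℝ) (fun j => y (i.succAbove j)) := by
  refine ⟨⟨(m:ℝ) * (m+1) + m, by positivity⟩, ?_⟩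
  intro P hP x y hx hy
  obtain ⟨hx1, hxi⟩ := hP x hx
  obtain ⟨hy1, hyi⟩ := hP y hy
  set d := dist (fun j => x (i.succAbove j) : Fin m → ℝ) (fun j => y (i.succAbove j)) with hd
  have hd0 : 0 ≤ d := dist_nonneg
  have hj : ∀ j, |x (i.succAbove j) - y (i.succAbove j)| ≤ d := fun j => by
    rw [← Real.dist_eq]
    exact dist_le_pi_dist (fun j => x (i.succAbove j) : Fin m → ℝ) (fun j => y (i.succAbove j)) j
  have hxa : ∀ j, |x j| ≤ 1 := fun j => by
    have := PiLp.norm_apply_le x j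
    rwa [hx1] at this
  have hya : ∀ j, |y j| ≤ 1 := fun j => by
    have := PiLp.norm_apply_le y j
    rwa [hy1] at this
  have hxs : ∑ j, (x j)^2 = 1 := by
    have := EuclideanSpace.norm_sq_eq x
    simp [hx1] at this
    exact this.symm
  have hys : ∑ j, (y j)^2 = 1 := by
    have := EuclideanSpace.norm_sq_eq y
    simp [hy1] at this
    exact this.symm
  rw [Fin.sum_univ_succAbove _ i] at hxs hys
  have hsum : |∑ j, ((x (i.succAbove j))^2 - (y (i.succAbove j))^2)| ≤ m * (2 * d) := by
    refine (Finset.abs_sum_le_sum_abs _ _).trans ?_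
    refine (Finset.sum_le_card_nsmul _ _ (2*d) ?_).trans (by simp)
    intro j _
    rw [sq_sub_sq, abs_mul]
    have h1 := hj j
    have h2 : |x (i.succAbove j) + y (i.succAbove j)| ≤ 2 := 
      (abs_add_le _ _).trans (by linarith [hxa (i.succAbove j), hya (i.succAbove j)])
    gcongr
  rw [Finset.sum_sub_distrib] at hsum
  have h3 : |(x i - y i)| * (2 / ((m:ℝ)+1)) ≤ m * (2*d) := by
    have e : ∑ j, (x (i.succAbove j))^2 - ∑ j, (y (i.succAbove j))^2 = -((x i - y i) * (x i + y i)) := by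
      linarith
    rw [e, abs_neg, abs_mul] at hsum
    refine le_trans ?_ hsum
    gcongr
    have : 2 / ((m:ℝ)+1) = 1 / ((m:ℝ)+1) + 1 / ((m:ℝ)+1) := by ring
    rw [this]
    rcases hs with rfl | rfl
    · exact le_trans (by linarith) (le_abs_self _)
    · exact le_trans (by linarith) (neg_le_abs _)
  have h4 : |x i - y i| ≤ m * (m+1) * d := by
    have hm : (0:ℝ) < m + 1 := by positivity
    rw [mul_div_assoc', div_le_iff₀ hm] at h3
    linarith
  have h5 : dist x y ≤ ∑ j, |x j - y j| := by
    rw [EuclideanSpace.dist_eq]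
    refine (Real.sqrt_le_sqrt (Finset.sum_sq_le_sq_sum_of_nonneg (fun j _ => dist_nonneg))).trans ?_
    rw [Real.sqrt_sq (Finset.sum_nonneg fun j _ => dist_nonneg)]
    simp [Real.dist_eq]
  rw [Fin.sum_univ_succAbove _ i] at h5
  have h6 : ∑ j, |x (i.succAbove j) - y (i.succAbove j)| ≤ m * d :=
    (Finset.sum_le_card_nsmul _ _ d (fun j _ => hj j)).trans (by simp)
  change dist x y ≤ ((m:ℝ) * (m+1) + m) * d
  linarith

lemma frost_piece2 (m : ℕ) (i : Fin (m+1)) (s : ℝ) (hs : s = 1 ∨ s = -1) :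
    ∃ A : ℝ, 0 < A ∧ ∀ (x : EuclideanSpace ℝ (Fin (m+1))) (r : ℝ), 0 < r → 
      μH[(m:ℝ)] ({y | ‖y‖ = 1 ∧ 1 / ((m:ℝ)+1) ≤ s * y i} ∩ Metric.closedBall x r) ≤ 
        ENNReal.ofReal (A * r ^ m) := by
  obtain ⟨K, hK⟩ := frost_piece m i s hs
  refine ⟨K^m * 2^m + 1, by positivity, ?_⟩
  intro x r hr
  set P := {y : EuclideanSpace ℝ (Fin (m+1)) | ‖y‖ = 1 ∧ 1 / ((m:ℝ)+1) ≤ s * y i} ∩ Metric.closedBall x r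
  have hK' := hK P (fun y hy => hy.1)
  set p : EuclideanSpace ℝ (Fin (m+1)) → (Fin m → ℝ) := fun x j => x (i.succAbove j) with hp
  have hinj : Set.InjOn p P := by
    intro a ha b hb hab
    have := hK' a b ha hb
    change dist a b ≤ K * dist (p a) (p b) at this
    rw [hab, dist_self, mul_zero] at this
    exact dist_le_zero.1 this
  have himg : P = Function.invFunOn p P '' (p '' P) := by
    ext a
    constructor
    · intro ha
      exact ⟨p a, ⟨a, ha, rfl⟩, hinj.leftInvOn_invFunOn ha⟩
    · rintro ⟨_, ⟨b, hb, rfl⟩, rfl⟩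
      rw [hinj.leftInvOn_invFunOn hb]
      exact hb
  have hlip : LipschitzOnWith K (Function.invFunOn p P) (p '' P) := by
    apply LipschitzOnWith.of_dist_le_mul
    rintro _ ⟨a, ha, rfl⟩ _ ⟨b, hb, rfl⟩
    rw [hinj.leftInvOn_invFunOn ha, hinj.leftInvOn_invFunOn hb]
    exact hK' a b ha hb
  have h1 := hlip.hausdorffMeasure_image_le (d := (m:ℝ)) (by positivity)
  rw [← himg] at h1
  refine h1.trans ?_
  have h2 : (μH[(m:ℝ)] : Measure (Fin m → ℝ)) = volume := by
    have := hausdorffMeasure_pi_real (ι := Fin m)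
    simpa using this
  rw [h2]
  have h3 : p '' P ⊆ Metric.closedBall (p x) r := by
    rintro _ ⟨a, ha, rfl⟩
    rw [Metric.mem_closedBall, dist_pi_le_iff hr.le]
    intro j
    have := PiLp.norm_apply_le (a - x) (i.succAbove j)
    rw [← dist_eq_norm] at this
    exact this.trans ha.2
  refine (mul_le_mul_right (measure_mono h3) _).trans ?_
  rw [Real.volume_pi_closedBall _ hr.le]
  rw [ENNReal.rpow_natCast, ← ENNReal.ofReal_coe_nnreal, ← ENNReal.ofReal_pow (by positivity), ← ENNReal.ofReal_mul (by positivity)]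
  apply ENNReal.ofReal_le_ofReal
  simp only [Fintype.card_fin, mul_pow]
  have : 0 ≤ r ^ m := by positivity
  nlinarith

lemma frost (m : ℕ) :
    ∃ A : ℝ, 0 < A ∧ ∀ (x : EuclideanSpace ℝ (Fin (m+1))) (r : ℝ), 0 < r → 
      (μH[(m:ℝ)]).restrict (Metric.sphere (0 : EuclideanSpace ℝ (Fin (m+1))) 1) (Metric.closedBall x r) ≤ 
        ENNReal.ofReal (A * r ^ m) := by
  choose A hA hA' using fun i => frost_piece2 m i 1 (Or.inl rfl)
  choose B hB hB' using fun i => frost_piece2 m i (-1) (Or.inr rfl)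
  refine ⟨∑ i, (A i + B i), Finset.sum_pos (fun i _ => add_pos (hA i) (hB i)) Finset.univ_nonempty, ?_⟩
  intro x r hr
  rw [Measure.restrict_apply Metric.isClosed_closedBall.measurableSet]
  have hsub : Metric.closedBall x r ∩ Metric.sphere 0 1 ⊆ ⋃ i : Fin (m+1), 
     (({y | ‖y‖ = 1 ∧ 1 / ((m:ℝ)+1) ≤ 1 * y i} ∩ Metric.closedBall x r) ∪ 
      ({y | ‖y‖ = 1 ∧ 1 / ((m:ℝ)+1) ≤ (-1) * y i} ∩ Metric.closedBall x r)) := by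
    rintro y ⟨hy, hy1⟩
    rw [mem_sphere_zero_iff_norm] at hy1
    by_contra hcon
    simp only [Set.mem_iUnion, Set.mem_union, Set.mem_inter_iff, Set.mem_ofPred_eq, hy1, hy, not_exists, not_or, true_and, and_true, not_le] at hcon
    have hys : ∑ j, (y j)^2 = 1 := by
      have := EuclideanSpace.norm_sq_eq y
      simp [hy1] at this
      exact this.symm
    have hm : 1 / ((m:ℝ)+1) ≤ 1 := by
      rw [div_le_one (by positivity)]; linarith [(Nat.cast_nonneg m : (0:ℝ) ≤ m)]
    have hm0 : 0 < 1 / ((m:ℝ)+1) := by positivity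
    have : ∑ j, (y j)^2 < ∑ j : Fin (m+1), 1 / ((m:ℝ)+1) := by
      apply Finset.sum_lt_sum_of_nonempty Finset.univ_nonempty
      intro j _
      obtain ⟨h1, h2⟩ := hcon j
      nlinarith
    rw [hys] at this
    simp at this
    rw [mul_inv_cancel₀ (by positivity)] at this
    exact lt_irrefl _ this
  refine (measure_mono hsub).trans ((measure_iUnion_fintype_le _ _).trans ?_)
  rw [Finset.sum_mul, ENNReal.ofReal_sum_of_nonneg (fun i _ => by have := hA i; have := hB i; positivity)]
  refine Finset.sum_le_sum fun i _ => (measure_union_le _ _).trans ?_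
  rw [add_mul, ENNReal.ofReal_add (by have := hA i; positivity) (by have := hB i; positivity)]
  exact add_le_add (hA' i x r hr) (hB' i x r hr)

lemma schur_bound (m : ℕ) (A : ℝ) (hA : 0 < A) :
    ∃ B : ℝ, 0 < B ∧ ∀ (μ : Measure (EuclideanSpace ℝ (Fin (m+1)))),
      (∀ (x : EuclideanSpace ℝ (Fin (m+1))) (r : ℝ), 0 < r → 
        μ (Metric.closedBall x r) ≤ ENNReal.ofReal (A * r ^ m)) →
      ∀ κ : ℝ, 0 < κ → ∀ x, 
        ∫⁻ y, ENNReal.ofReal (Real.exp (-(κ^2 * ‖x - y‖^2 / 4))) ∂μ ≤ ENNReal.ofReal (B / κ ^ m) := by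
  have hsm : Summable (fun k : ℕ => Real.exp (-((k:ℝ)^2/4)) * (A * ((k:ℝ)+1)^m)) := by
    have h := Real.summable_pow_mul_exp_neg_nat_mul m (r := 1/4) (by norm_num)
    have h' := ((summable_nat_add_iff 1).2 h).mul_left (A * Real.exp (1/4))
    refine Summable.of_nonneg_of_le (fun k => by positivity) (fun k => ?_) h'
    have hk : (k:ℝ) ≤ (k:ℝ)^2 := by exact_mod_cast Nat.le_self_pow (by norm_num) k
    have : Real.exp (-((k:ℝ)^2/4)) ≤ Real.exp (1/4) * Real.exp (-(1/4) * ((k+1 : ℕ):ℝ)) := by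
      rw [← Real.exp_add]
      apply Real.exp_le_exp.2
      push_cast
      linarith
    calc _ ≤ (Real.exp (1/4) * Real.exp (-(1/4) * ((k+1 : ℕ):ℝ))) * (A * ((k:ℝ)+1)^m) := by gcongr
      _ = _ := by push_cast; ring
  have hpos : 0 ≤ ∑' k : ℕ, Real.exp (-((k:ℝ)^2/4)) * (A * ((k:ℝ)+1)^m) := tsum_nonneg fun k => by positivity
  refine ⟨(∑' k : ℕ, Real.exp (-((k:ℝ)^2/4)) * (A * ((k:ℝ)+1)^m)) + 1, by positivity, ?_⟩
  intro μ hμ κ hκ x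
  have hpt : ∀ y, ENNReal.ofReal (Real.exp (-(κ^2 * ‖x - y‖^2 / 4))) ≤ 
      ∑' k : ℕ, (Metric.closedBall x (((k:ℝ)+1)/κ)).indicator (fun _ => ENNReal.ofReal (Real.exp (-((k:ℝ)^2/4)))) y := by
    intro y
    refine le_trans ?_ (ENNReal.le_tsum (⌊κ * ‖x-y‖⌋₊))
    have h1 := Nat.floor_le (show 0 ≤ κ * ‖x-y‖ by positivity)
    have h2 := Nat.lt_floor_add_one (κ * ‖x-y‖)
    rw [Set.indicator_of_mem]
    · apply ENNReal.ofReal_le_ofReal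
      apply Real.exp_le_exp.2
      have := pow_le_pow_left₀ (Nat.cast_nonneg _) h1 2
      rw [mul_pow] at this
      linarith
    · rw [Metric.mem_closedBall, dist_comm, dist_eq_norm, le_div_iff₀ hκ]
      linarith
  refine (lintegral_mono hpt).trans ?_
  rw [lintegral_tsum (fun k => (measurable_const.indicator Metric.isClosed_closedBall.measurableSet).aemeasurable)]
  have hk : ∀ k : ℕ, ∫⁻ y, (Metric.closedBall x (((k:ℝ)+1)/κ)).indicator (fun _ => ENNReal.ofReal (Real.exp (-((k:ℝ)^2/4)))) y ∂μ 
      ≤ ENNReal.ofReal (Real.exp (-((k:ℝ)^2/4)) * (A * ((k:ℝ)+1)^m) / κ^m) := by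
    intro k
    rw [lintegral_indicator_const Metric.isClosed_closedBall.measurableSet]
    refine (mul_le_mul_right (hμ x _ (by positivity)) _).trans ?_
    rw [← ENNReal.ofReal_mul (by positivity)]
    apply ENNReal.ofReal_le_ofReal
    rw [div_pow]
    apply le_of_eq; ring
  refine (ENNReal.tsum_le_tsum hk).trans ?_
  rw [← ENNReal.ofReal_tsum_of_nonneg (fun k => by positivity) (hsm.div_const _), tsum_div_const]
  apply ENNReal.ofReal_le_ofReal
  gcongr
  linarith

lemma core (m : ℕ) (μ : Measure (EuclideanSpace ℝ (Fin (m+1)))) [IsFiniteMeasure μ] (κ D : ℝ) (hD : 0 ≤ D)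
    (hS : ∀ x, ∫⁻ y, ENNReal.ofReal (Real.exp (-(κ^2 * ‖x - y‖^2 / 4))) ∂μ ≤ ENNReal.ofReal D)
    (f : EuclideanSpace ℝ (Fin (m+1)) → ℂ) (hf : Integrable f μ) (hf2 : Integrable (fun ω => ‖f ω‖^2) μ) :
    ∫ x in Metric.ball (0 : EuclideanSpace ℝ (Fin (m+1))) 1,
      ‖∫ ω, Complex.exp (Complex.I * κ * (⟪ω, x⟫ : ℝ)) * f ω ∂μ‖^2 ≤ 
      Real.exp 1 * (Real.pi ^ (((m:ℝ)+1)/2) * (D * ∫ ω, ‖f ω‖^2 ∂μ)) := by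
  set F : EuclideanSpace ℝ (Fin (m+1)) → ℂ := fun x => ∫ ω, Complex.exp (Complex.I * κ * (⟪ω, x⟫ : ℝ)) * f ω ∂μ with hF
  have hne : ∀ ω x : EuclideanSpace ℝ (Fin (m+1)), ‖Complex.exp (Complex.I * κ * (⟪ω, x⟫ : ℝ))‖ = 1 := by
    intro ω x
    rw [Complex.norm_exp]
    simp
  have hFc : Continuous F := by
    apply continuous_of_dominated (bound := fun ω => ‖f ω‖)
    · intro x
      exact (Continuous.aestronglyMeasurable (by fun_prop)).mul hf.1
    · intro x
      refine Filter.Eventually.of_forall fun ω => ?_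
      rw [norm_mul, hne, one_mul]
    · exact hf.norm
    · refine Filter.Eventually.of_forall fun ω => ?_
      fun_prop
  have hFb : ∀ x, ‖F x‖ ≤ ∫ ω, ‖f ω‖ ∂μ := by
    intro x
    refine (norm_integral_le_integral_norm _).trans (le_of_eq ?_)
    congr 1; ext ω
    rw [norm_mul, hne, one_mul]
  have hG : Integrable (fun x : EuclideanSpace ℝ (Fin (m+1)) => Real.exp (-‖x‖^2)) := by
    have := GaussianFourier.integrable_cexp_neg_mul_sq_norm_add (V := EuclideanSpace ℝ (Fin (m+1))) (b := 1) (by simp) 0 0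
    have := this.norm
    refine this.congr (Filter.Eventually.of_forall fun x => ?_)
    simp only [Complex.norm_exp]
    simp [← Complex.ofReal_pow]
  have hGF : Integrable (fun x => Real.exp (-‖x‖^2) * ‖F x‖^2) := by
    refine hG.mul_bdd (c := (∫ ω, ‖f ω‖ ∂μ)^2) (by fun_prop) (Filter.Eventually.of_forall fun x => ?_)
    rw [Real.norm_eq_abs, abs_of_nonneg (by positivity)]
    exact pow_le_pow_left₀ (norm_nonneg _) (hFb x) 2
  -- step 1
  have s1 : ∫ x in Metric.ball (0 : EuclideanSpace ℝ (Fin (m+1))) 1, ‖F x‖^2 ≤ 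
      Real.exp 1 * ∫ x, Real.exp (-‖x‖^2) * ‖F x‖^2 := by
    rw [← integral_const_mul]
    refine le_trans ?_ (setIntegral_le_integral (s := Metric.ball 0 1) (hGF.const_mul _) (Filter.Eventually.of_forall fun x => by positivity))
    apply setIntegral_mono_on
    · refine Measure.integrableOn_of_bounded (M := (∫ ω, ‖f ω‖ ∂μ)^2) measure_ball_lt_top.ne (by fun_prop) (Filter.Eventually.of_forall fun x => ?_)
      rw [Real.norm_eq_abs, abs_of_nonneg (by positivity)]
      exact pow_le_pow_left₀ (norm_nonneg _) (hFb x) 2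
    · exact (hGF.const_mul _).integrableOn
    · exact measurableSet_ball
    · intro x hx
      rw [← mul_assoc, ← Real.exp_add]
      refine le_mul_of_one_le_left (by positivity) (Real.one_le_exp ?_)
      rw [mem_ball_zero_iff] at hx
      nlinarith [norm_nonneg x]
  refine s1.trans ?_
  gcongr
  -- step 2
  have hprod : Integrable (fun p : EuclideanSpace ℝ (Fin (m+1)) × EuclideanSpace ℝ (Fin (m+1)) => f p.1 * (starRingEnd ℂ) (f p.2)) (μ.prod μ) :=
    hf.mul_prod (Complex.conjLIE.integrable_comp_iff.2 hf)
  have hFF : ∀ x, ((‖F x‖^2 : ℝ) : ℂ) = ∫ p, Complex.exp (Complex.I * κ * (⟪p.1 - p.2, x⟫ : ℝ)) * (f p.1 * (starRingEnd ℂ) (f p.2)) ∂(μ.prod μ) := by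
    intro x
    rw [← Complex.normSq_eq_norm_sq, ← Complex.mul_conj, hF]
    simp only
    rw [← integral_conj, ← integral_prod_mul]
    congr 1; ext p
    rw [map_mul, ← Complex.exp_conj, inner_sub_left]
    simp only [map_mul, Complex.conj_I, Complex.conj_ofReal]
    rw [show Complex.I * κ * ((⟪p.1, x⟫ - ⟪p.2, x⟫ : ℝ):ℂ) = Complex.I * κ * (⟪p.1, x⟫ : ℝ) + -Complex.I * κ * (⟪p.2, x⟫ : ℝ) by push_cast; ring, Complex.exp_add]
    ring
  have hgauss : ∀ w : EuclideanSpace ℝ (Fin (m+1)), ∫ x : EuclideanSpace ℝ (Fin (m+1)), (Real.exp (-‖x‖^2) : ℂ) * Complex.exp (Complex.I * κ * (⟪w, x⟫ : ℝ)) = 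
      ((Real.pi ^ (((m:ℝ)+1)/2) * Real.exp (-(κ^2 * ‖w‖^2/4)) : ℝ) : ℂ) := by
    intro w
    have := GaussianFourier.integral_cexp_neg_mul_sq_norm_add (V := EuclideanSpace ℝ (Fin (m+1))) (b := 1) (by simp) (Complex.I * κ) w
    rw [finrank_euclideanSpace_fin] at this
    calc _ = ∫ v : EuclideanSpace ℝ (Fin (m+1)), Complex.exp (-1 * (‖v‖:ℂ)^2 + Complex.I * κ * (⟪w, v⟫ : ℝ)) := by
          congr 1; ext v
          rw [Complex.exp_add]; push_cast; simp
      _ = _ := by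
          rw [this]
          push_cast
          rw [Complex.ofReal_cpow Real.pi_pos.le, mul_pow, Complex.I_sq]
          push_cast
          congr 2 <;> ring
  have hint : Integrable (fun q : EuclideanSpace ℝ (Fin (m+1)) × (EuclideanSpace ℝ (Fin (m+1)) × EuclideanSpace ℝ (Fin (m+1))) => 
      (Real.exp (-‖q.1‖^2) : ℂ) * (Complex.exp (Complex.I * κ * (⟪q.2.1 - q.2.2, q.1⟫ : ℝ)) * (f q.2.1 * (starRingEnd ℂ) (f q.2.2)))) (volume.prod (μ.prod μ)) := by
    have h := (hG.ofReal (𝕜 := ℂ)).mul_prod hprod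
    have h' := h.bdd_mul (f := fun q => Complex.exp (Complex.I * κ * (⟪q.2.1 - q.2.2, q.1⟫ : ℝ))) (c := 1) (Continuous.aestronglyMeasurable (by fun_prop)) (Filter.Eventually.of_forall fun q => (hne _ _).le)
    refine h'.congr (Filter.Eventually.of_forall fun q => ?_)
    simp only
    simp
    ring
  have s2 : ((∫ x, Real.exp (-‖x‖^2) * ‖F x‖^2 : ℝ) : ℂ) = 
      ∫ p, ((Real.pi ^ (((m:ℝ)+1)/2) * Real.exp (-(κ^2 * ‖p.1 - p.2‖^2/4)) : ℝ) : ℂ) * (f p.1 * (starRingEnd ℂ) (f p.2)) ∂(μ.prod μ) := by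
    rw [← integral_complex_ofReal]
    calc _ = ∫ x : EuclideanSpace ℝ (Fin (m+1)), ∫ p, (Real.exp (-‖x‖^2) : ℂ) * (Complex.exp (Complex.I * κ * (⟪p.1 - p.2, x⟫ : ℝ)) * (f p.1 * (starRingEnd ℂ) (f p.2))) ∂(μ.prod μ) := by
          congr 1; ext x
          rw [integral_const_mul, ← hFF]
          push_cast; rfl
      _ = _ := by
          rw [integral_integral_swap hint]
          congr 1; ext p
          rw [← hgauss, ← integral_mul_const]
          congr 1; ext x; ring
  -- step 3: Schur
  set g : EuclideanSpace ℝ (Fin (m+1)) → EuclideanSpace ℝ (Fin (m+1)) → ℝ := fun a b => Real.exp (-(κ^2 * ‖a - b‖^2/4)) with hg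
  have hg1 : ∀ a b, ‖g a b‖ ≤ 1 := by
    intro a b
    rw [Real.norm_eq_abs, Real.abs_exp]
    apply Real.exp_le_one_iff.2
    have : 0 ≤ κ^2 * ‖a-b‖^2/4 := by positivity
    linarith
  have hS' : ∀ a, ∫ b, g a b ∂μ ≤ D := by
    intro a
    rw [integral_eq_lintegral_of_nonneg_ae (Filter.Eventually.of_forall fun b => (Real.exp_pos _).le) (Continuous.aestronglyMeasurable (by fun_prop))]
    exact ENNReal.toReal_le_of_le_ofReal hD (hS a)
  have hi1 : Integrable (fun p : EuclideanSpace ℝ (Fin (m+1)) × EuclideanSpace ℝ (Fin (m+1)) => g p.1 p.2 * ‖f p.1‖^2) (μ.prod μ) := by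
    refine Integrable.bdd_mul (c := 1) (hf2.comp_fst μ) (Continuous.aestronglyMeasurable (by fun_prop)) (Filter.Eventually.of_forall fun q => hg1 _ _)
  have hi2 : Integrable (fun p : EuclideanSpace ℝ (Fin (m+1)) × EuclideanSpace ℝ (Fin (m+1)) => g p.1 p.2 * ‖f p.2‖^2) (μ.prod μ) := by
    refine Integrable.bdd_mul (c := 1) (hf2.comp_snd μ) (Continuous.aestronglyMeasurable (by fun_prop)) (Filter.Eventually.of_forall fun q => hg1 _ _)
  have e1 : ∫ p, g p.1 p.2 * ‖f p.1‖^2 ∂(μ.prod μ) ≤ D * ∫ ω, ‖f ω‖^2 ∂μ := by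
    rw [integral_prod _ hi1, ← integral_const_mul]
    refine integral_mono hi1.integral_prod_left (hf2.const_mul _) fun a => ?_
    simp only
    rw [integral_mul_const]
    exact mul_le_mul_of_nonneg_right (hS' a) (by positivity)
  have e2 : ∫ p, g p.1 p.2 * ‖f p.2‖^2 ∂(μ.prod μ) ≤ D * ∫ ω, ‖f ω‖^2 ∂μ := by
    refine le_trans (le_of_eq ?_) e1
    rw [← integral_prod_swap]
    congr 1; ext p
    simp [hg, norm_sub_rev]
  have hnn : 0 ≤ ∫ x, Real.exp (-‖x‖^2) * ‖F x‖^2 := integral_nonneg fun x => by positivity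
  calc ∫ x, Real.exp (-‖x‖^2) * ‖F x‖^2 = ‖((∫ x, Real.exp (-‖x‖^2) * ‖F x‖^2 : ℝ) : ℂ)‖ := by
        rw [Complex.norm_real, Real.norm_eq_abs, abs_of_nonneg hnn]
    _ ≤ ∫ p, ‖((Real.pi ^ (((m:ℝ)+1)/2) * g p.1 p.2 : ℝ) : ℂ) * (f p.1 * (starRingEnd ℂ) (f p.2))‖ ∂(μ.prod μ) := by
        rw [s2]; exact norm_integral_le_integral_norm _
    _ ≤ ∫ p, Real.pi ^ (((m:ℝ)+1)/2) * ((g p.1 p.2 * ‖f p.1‖^2 + g p.1 p.2 * ‖f p.2‖^2)/2) ∂(μ.prod μ) := by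
        refine integral_mono_of_nonneg (Filter.Eventually.of_forall fun p => norm_nonneg _) (((hi1.add hi2).div_const 2).const_mul _) (Filter.Eventually.of_forall fun p => ?_)
        have hgp : 0 ≤ g p.1 p.2 := (Real.exp_pos _).le
        simp only [norm_mul, Complex.norm_real, RCLike.norm_conj]
        rw [Real.norm_of_nonneg hgp, Real.norm_of_nonneg (by positivity), mul_assoc]
        gcongr
        nlinarith [mul_nonneg hgp (sq_nonneg (‖f p.1‖ - ‖f p.2‖))]
    _ ≤ _ := by
        rw [integral_const_mul, integral_div, integral_add hi1 hi2]
        gcongr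
        linarith

/-- Scaled Agmon–Hörmander estimate: there is `C(n) > 0` such that for every
`κ > 0` and every `f ∈ L²(S^{n−1})`, the Herglotz wave
`(P_κ f)(x) = ∫_{S^{n−1}} e^{iκω·x} f(ω) dS(ω)` satisfies
`κ^{(n−1)/2} ‖P_κ f‖_{L²(B₁)} ≤ C(n) ‖f‖_{L²(S^{n−1})}`; `dS` is the surface
(`(n−1)`-Hausdorff) measure on the unit sphere. -/
theorem stmt_19 (n : ℕ) (hn : 2 ≤ n) :
    ∃ C : ℝ, 0 < C ∧ ∀ κ : ℝ, 0 < κ →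
      ∀ f : EuclideanSpace ℝ (Fin n) → ℂ,
        Integrable f ((μH[(n : ℝ) - 1]).restrict
          (Metric.sphere (0 : EuclideanSpace ℝ (Fin n)) 1)) →
        Integrable (fun ω => ‖f ω‖ ^ 2) ((μH[(n : ℝ) - 1]).restrict
          (Metric.sphere (0 : EuclideanSpace ℝ (Fin n)) 1)) →
        κ ^ (((n : ℝ) - 1) / 2) *
          Real.sqrt (∫ x in Metric.ball (0 : EuclideanSpace ℝ (Fin n)) 1,
            ‖∫ ω in Metric.sphere (0 : EuclideanSpace ℝ (Fin n)) 1,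
                Complex.exp (Complex.I * κ * (⟪ω, x⟫ : ℝ)) * f ω
              ∂(μH[(n : ℝ) - 1])‖ ^ 2)
        ≤ C * Real.sqrt (∫ ω in Metric.sphere (0 : EuclideanSpace ℝ (Fin n)) 1,
            ‖f ω‖ ^ 2 ∂(μH[(n : ℝ) - 1])) := by
  obtain ⟨m, rfl⟩ : ∃ m, n = m + 1 := ⟨n - 1, by omega⟩
  have hm : ((m + 1 : ℕ) : ℝ) - 1 = m := by push_cast; ring
  rw [hm]
  obtain ⟨A, hA, hA'⟩ := frost m
  obtain ⟨B, hB, hB'⟩ := schur_bound m A hA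
  set μ : Measure (EuclideanSpace ℝ (Fin (m+1))) :=
    (μH[(m:ℝ)]).restrict (Metric.sphere (0 : EuclideanSpace ℝ (Fin (m+1))) 1) with hμ
  haveI : IsFiniteMeasure μ := by
    constructor
    have h1 : μ Set.univ = μ (Metric.closedBall 0 1) := by
      rw [hμ, Measure.restrict_apply MeasurableSet.univ,
        Measure.restrict_apply Metric.isClosed_closedBall.measurableSet, Set.univ_inter,
        Set.inter_eq_right.2 Metric.sphere_subset_closedBall]
    rw [h1]
    exact (hA' 0 1 one_pos).trans_lt ENNReal.ofReal_lt_top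
  set E : ℝ := Real.exp 1 * (Real.pi ^ (((m:ℝ)+1)/2) * B) with hE
  have hE0 : 0 < E := by positivity
  refine ⟨Real.sqrt E, Real.sqrt_pos.2 hE0, ?_⟩
  intro κ hκ f hf hf2
  have h := core m μ κ (B / κ ^ m) (by positivity) (hB' μ hA' κ hκ) f hf hf2
  have hk : κ ^ ((m:ℝ)/2) = Real.sqrt (κ ^ m) := by
    rw [Real.sqrt_eq_rpow, ← Real.rpow_natCast, ← Real.rpow_mul hκ.le]
    congr 1; ring
  rw [hk, ← Real.sqrt_mul (by positivity), ← Real.sqrt_mul hE0.le]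
  apply Real.sqrt_le_sqrt
  refine (mul_le_mul_of_nonneg_left h (by positivity)).trans (le_of_eq ?_)
  rw [hE]
  field_simp
end
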